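/- There do not exist an integer N ≥ 1 and continuous functions h_{1,1},…,h_{1,N} and h_{2,1},…,h_{2,N} from (0,∞) to ℝ such that (x+y)^{−2} = Σ_{ℓ=1}^{N} h_{1,ℓ}(x) · h_{2,ℓ}(y) for all x, y ∈ (0,∞). -/

import Mathlib

/-! If such a decomposition existed, the `N + 1` vectors `(h₁ ℓ (i + 1))_ℓ ∈ ℝ^N`, `0 ≤ i ≤ N`,
would satisfy a nontrivial linear relation with coefficients `c i`, and hence
`∑ i, c i / ((i + 1) + y)² = 0` for all `y > 0`. This contradicts the linear independence of the
functions `y ↦ (a i + y)⁻²` for distinct `a i > 0` (`coeff_eq_zero_of_sum_inv_sq`), which follows by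
clearing denominators and evaluating the resulting polynomial at `-a i`. -/

open Polynomial in
/-- The functions `y ↦ (a i + y)⁻²` on `(0, ∞)`, with distinct `a i > 0`, are linearly
independent. -/
lemma coeff_eq_zero_of_sum_inv_sq {ι : Type*} [Fintype ι] [DecidableEq ι] (a c : ι → ℝ)
    (ha : Function.Injective a) (hpos : ∀ i, 0 < a i)
    (h : ∀ y : ℝ, 0 < y → ∑ i, c i * ((a i + y) ^ 2)⁻¹ = 0) (i : ι) : c i = 0 := by
  -- the numerator over the common denominator `∏ j, (a j + y) ^ 2`
  let p : ℝ[X] := ∑ i, C (c i) * ∏ j ∈ Finset.univ.erase i, (C (a j) + X) ^ 2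
  have heval (y : ℝ) : p.eval y = ∑ i, c i * ∏ j ∈ Finset.univ.erase i, (a j + y) ^ 2 := by
    simp [p, eval_finsetSum, eval_prod]
  have hp : p = 0 := by
    refine eq_zero_of_infinite_isRoot p ((Set.Ioi_infinite (0 : ℝ)).mono fun y hy ↦ ?_)
    have hy : 0 < y := hy
    change p.eval y = 0
    rw [heval]
    calc ∑ i, c i * ∏ j ∈ Finset.univ.erase i, (a j + y) ^ 2
        = ∑ i, (∏ j, (a j + y) ^ 2) * (c i * ((a i + y) ^ 2)⁻¹) := by
          refine Finset.sum_congr rfl fun i _ ↦ ?_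
          rw [← Finset.mul_prod_erase Finset.univ _ (Finset.mem_univ i)]
          have := (add_pos (hpos i) hy).ne'
          field_simp
      _ = 0 := by rw [← Finset.mul_sum, h y hy, mul_zero]
  -- at `-a i` only the `i`-th summand of `p` survives
  have h0 := heval (-a i)
  rw [hp, eval_zero, Finset.sum_eq_single i] at h0
  · refine (mul_eq_zero.mp h0.symm).resolve_right (Finset.prod_ne_zero_iff.mpr fun j hj ↦ ?_)
    have hne : a j ≠ a i := fun e ↦ Finset.ne_of_mem_erase hj (ha e)
    exact pow_ne_zero 2 (by rwa [← sub_eq_add_neg, sub_ne_zero])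
  · intro k _ hk
    rw [Finset.prod_eq_zero (i := i) (by simp [hk.symm]) (by simp), mul_zero]
  · simp


/-- There is no finite decomposition `(x+y)^{-2} = Σ_{ℓ=1}^{N} h_{1,ℓ}(x) h_{2,ℓ}(y)`
with `N ≥ 1` and `h_{i,ℓ}` continuous functions on `(0,∞)`. -/
theorem no_finite_decomposition_inv_sq :
    ¬ ∃ (N : ℕ) (h₁ h₂ : Fin N → ℝ → ℝ),
        1 ≤ N ∧
        (∀ ℓ, ContinuousOn (h₁ ℓ) (Set.Ioi 0)) ∧
        (∀ ℓ, ContinuousOn (h₂ ℓ) (Set.Ioi 0)) ∧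
        ∀ x ∈ Set.Ioi (0 : ℝ), ∀ y ∈ Set.Ioi (0 : ℝ),
          ((x + y) ^ 2)⁻¹ = ∑ ℓ, h₁ ℓ x * h₂ ℓ y := by
  rintro ⟨N, h₁, h₂, -, -, -, h⟩
  let a : Fin (N + 1) → ℝ := fun i ↦ (i : ℝ) + 1
  have hpos (i) : 0 < a i := by positivity
  have ha : Function.Injective a := fun i j hij ↦ by
    simpa [a, Fin.ext_iff] using hij
  have hdep : ¬ LinearIndependent ℝ (fun i ↦ fun ℓ ↦ h₁ ℓ (a i)) := fun hli ↦ by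
    simpa using hli.fintype_card_le_finrank
  obtain ⟨c, hc, i, hi⟩ := Fintype.not_linearIndependent_iff.mp hdep
  refine hi (coeff_eq_zero_of_sum_inv_sq a c ha hpos (fun y hy ↦ ?_) i)
  have hc' (ℓ : Fin N) : ∑ i, c i * h₁ ℓ (a i) = 0 := by
    simpa using congrFun hc ℓ
  calc ∑ i, c i * ((a i + y) ^ 2)⁻¹
      = ∑ i, ∑ ℓ, c i * h₁ ℓ (a i) * h₂ ℓ y := by
        refine Finset.sum_congr rfl fun i _ ↦ ?_
        rw [h _ (hpos i) y hy, Finset.mul_sum]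
        exact Finset.sum_congr rfl fun ℓ _ ↦ (mul_assoc _ _ _).symm
    _ = ∑ ℓ, (∑ i, c i * h₁ ℓ (a i)) * h₂ ℓ y := by
        rw [Finset.sum_comm]
        simp_rw [Finset.sum_mul]
    _ = 0 := by simp [hc']
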